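/- Let P ∈ 𝔽_q[T] be monic irreducible of degree d, and let n be a positive integer which is a multiple of (q^d−1)/(q−1). Then the residue class of γ(n) in the field 𝔽_q[T]/(P) lies in the subfield 𝔽_q; equivalently, (γ(n) mod P)^q = γ(n) mod P. -/

import Mathlib

/-!
Let `q = #F`, `L = F[T]/(P)` and `d = [L : F]`. For `x ∈ L` the power `x ^ ((q ^ d - 1) / (q - 1))`
is the norm of `x` to `F`. So if `n` is a multiple of `(q ^ d - 1) / (q - 1)`, the `n`-th power of
every polynomial reduces into `F`, and so does every `F`-linear combination of `n`-th powers, of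
which `γ(n)` is one whatever the `F`-valued weights `i(a)` are.
-/

section FiniteExtension

variable {K L : Type*} [Field K] [Field L] [Algebra K L]

theorem pow_mem_bot_of_card_sub_one_div_dvd [Finite L] {n : ℕ}
    (hn : (Nat.card L - 1) / (Nat.card K - 1) ∣ n) (x : L) :
    x ^ n ∈ (⊥ : Subalgebra K L) := by
  obtain ⟨k, rfl⟩ := hn
  rw [pow_mul, ← FiniteField.algebraMap_norm_eq_pow]
  exact pow_mem ((⊥ : Subalgebra K L).algebraMap_mem _) k

theorem pow_card_eq_self_of_mem_bot [Fintype K] {A : Type*} [Semiring A] [Algebra K A] {x : A}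
    (hx : x ∈ (⊥ : Subalgebra K A)) : x ^ Fintype.card K = x := by
  obtain ⟨c, rfl⟩ := Algebra.mem_bot.mp hx
  rw [← map_pow, FiniteField.pow_card]

end FiniteExtension

section PolynomialQuotient

open Polynomial

variable {F : Type*} [Field F] {P : F[X]}

theorem finite_quotient_span_singleton (hP : P ≠ 0) : Module.Finite F (F[X] ⧸ Ideal.span {P}) :=
  (AdjoinRoot.powerBasis hP).finite

theorem natCard_quotient_span_singleton (hP : P ≠ 0) :
    Nat.card (F[X] ⧸ Ideal.span {P}) = Nat.card F ^ P.natDegree := by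
  have := finite_quotient_span_singleton hP
  rw [Module.natCard_eq_pow_finrank (K := F), finrank_quotient_span_eq_natDegree]

theorem mk_pow_mem_bot [Finite F] (hP : Irreducible P) {n : ℕ}
    (hn : (Nat.card F ^ P.natDegree - 1) / (Nat.card F - 1) ∣ n) (a : F[X]) :
    Ideal.Quotient.mk (Ideal.span {P}) a ^ n ∈ (⊥ : Subalgebra F (F[X] ⧸ Ideal.span {P})) := by
  have := PrincipalIdealRing.isMaximal_of_irreducible hP
  let := Ideal.Quotient.field (Ideal.span {P})
  have := finite_quotient_span_singleton hP.ne_zero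
  have : Finite (F[X] ⧸ Ideal.span {P}) := Module.finite_of_finite F
  rw [← natCard_quotient_span_singleton hP.ne_zero] at hn
  exact pow_mem_bot_of_card_sub_one_div_dvd hn _

theorem mk_mem_bot_of_mem_span_pow [Finite F] (hP : Irreducible P) {n : ℕ}
    (hn : (Nat.card F ^ P.natDegree - 1) / (Nat.card F - 1) ∣ n) {f : F[X]}
    (hf : f ∈ Submodule.span F (Set.range fun a : F[X] => a ^ n)) :
    Ideal.Quotient.mk (Ideal.span {P}) f ∈ (⊥ : Subalgebra F (F[X] ⧸ Ideal.span {P})) := by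
  let reducesIntoF : Submodule F F[X] :=
    ((⊥ : Subalgebra F (F[X] ⧸ Ideal.span {P})).comap
      (Ideal.Quotient.mkₐ F (Ideal.span {P}))).toSubmodule
  have pow_reducesIntoF : Set.range (fun a : F[X] => a ^ n) ⊆ reducesIntoF := by
    rintro _ ⟨a, rfl⟩
    exact mk_pow_mem_bot hP hn a
  exact Submodule.span_le.mpr pow_reducesIntoF hf

-- `finsum` is `0` on an infinite support, so membership requires no finiteness of the sums.
theorem finsum_finsum_C_mul_pow_mem_span {R ι : Type*} [Semiring R] (s : ι → Set R[X])
    (w : R[X] → R) (n : ℕ) :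
    ∑ᶠ i, ∑ᶠ a ∈ s i, C (w a) * a ^ n ∈ Submodule.span R (Set.range fun a : R[X] => a ^ n) := by
  set S := Submodule.span R (Set.range fun a : R[X] => a ^ n)
  have term_mem (a : R[X]) : C (w a) * a ^ n ∈ S := by
    rw [← smul_eq_C_mul]
    exact S.smul_mem _ (Submodule.subset_span ⟨a, rfl⟩)
  exact finsum_induction (· ∈ S) S.zero_mem (fun _ _ => S.add_mem) fun _ =>
    finsum_mem_induction (· ∈ S) S.zero_mem (fun _ _ => S.add_mem) fun a _ => term_mem a

theorem stmt_5_general [Fintype F] (hP : Irreducible P) {n : ℕ}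
    (hn : (Fintype.card F ^ P.natDegree - 1) / (Fintype.card F - 1) ∣ n) {f : F[X]}
    (hf : f ∈ Submodule.span F (Set.range fun a : F[X] => a ^ n)) :
    Ideal.Quotient.mk (Ideal.span {P}) f ^ Fintype.card F =
      Ideal.Quotient.mk (Ideal.span {P}) f := by
  rw [← Nat.card_eq_fintype_card] at hn
  exact pow_card_eq_self_of_mem_bot (mk_mem_bot_of_mem_span_pow hP hn hf)

end PolynomialQuotient

/-- Let `P ∈ 𝔽_q[T]` be monic irreducible of degree `d` and let `n` be a positive integer
which is a multiple of `(q^d − 1)/(q − 1)`. Then the residue class of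
`γ(n) = Σ_{m ≥ 0} Σ_{a ∈ A_m} i(a)·a^n` in `𝔽_q[T]/(P)` lies in the subfield `𝔽_q`,
i.e. `(γ(n) mod P)^q = γ(n) mod P`. Here `i(a) = Tr_{𝔽_q/𝔽_p}(a.nextCoeff) ∈ ℤ/pℤ`
is viewed in `𝔽_q`. -/
theorem stmt_5 (p s : ℕ) [Fact p.Prime] (F : Type*) [Field F] [Fintype F]
    [Algebra (ZMod p) F] (hq : Fintype.card F = p ^ s)
    (P : Polynomial F) (hP : P.Monic) (hirr : Irreducible P) (d : ℕ) (hd : P.natDegree = d)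
    (n : ℕ) (hn : 0 < n)
    (hmult : ((Fintype.card F ^ d - 1) / (Fintype.card F - 1)) ∣ n) :
    (Ideal.Quotient.mk (Ideal.span {P})
        (∑ᶠ m : ℕ, ∑ᶠ a ∈ {a : Polynomial F | a.Monic ∧ a.natDegree = m},
          Polynomial.C (algebraMap (ZMod p) F (Algebra.trace (ZMod p) F a.nextCoeff)) * a ^ n))
        ^ (Fintype.card F) =
      Ideal.Quotient.mk (Ideal.span {P})
        (∑ᶠ m : ℕ, ∑ᶠ a ∈ {a : Polynomial F | a.Monic ∧ a.natDegree = m},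
          Polynomial.C (algebraMap (ZMod p) F (Algebra.trace (ZMod p) F a.nextCoeff)) * a ^ n) := by
  subst hd
  exact stmt_5_general hirr hmult (finsum_finsum_C_mul_pow_mem_span _ _ n)
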